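/- arXiv:0910.5634 — 2 statements merged into one kernel-verified Lean document; each statement's English description precedes it below -/
import Mathlib

section
/- Two words w and w' (in the letter alphabet A = {e⃗_i, e⃖_i : i ∈ ℕ}, with finite fibers) can be reduced to the same reduced word if and only if for every finite subset I ⊆ ℕ the finite words w↾I and w'↾I have the same reduction in the free group on {e⃗_i : i ∈ I}. -/
open Set

noncomputable section

/-- A *reduction* of a word `w : S → A` over an alphabet `A` with letter-inversion
`inv`: a totally ordered set `R` (here: the linearly ordered index type `ι`) of disjoint
two-element subsets `{fst i, snd i}` of `S` such that the two elements of each pair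
`p ∈ R` are adjacent in `S` minus the union of the pairs preceding `p`, and are mapped
by `w` to mutually inverse letters. -/
structure Reduction {S A : Type} [LinearOrder S] (inv : A → A) (w : S → A) where
  /-- the (linearly ordered) index set of the reduction -/
  ι : Type
  [lin : LinearOrder ι]
  fst : ι → S
  snd : ι → S
  fst_lt_snd : ∀ i, fst i < snd i
  disjoint_pairs : ∀ i j, i ≠ j →
    fst i ≠ fst j ∧ fst i ≠ snd j ∧ snd i ≠ fst j ∧ snd i ≠ snd j
  inv_pair : ∀ i, w (snd i) = inv (w (fst i))
  adjacent : ∀ i, ∀ s : S, fst i < s → s < snd i →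
    ∃ j, j < i ∧ (s = fst j ∨ s = snd j)

attribute [instance] Reduction.lin

namespace Reduction

variable {S A : Type} [LinearOrder S] {inv : A → A} {w : S → A}

/-- The set of positions deleted by a reduction. -/
def deleted (R : Reduction inv w) : Set S := range R.fst ∪ range R.snd

/-- The word to which `w` reduces under the reduction `R`:
the restriction of `w` to the non-deleted positions. -/
def result (R : Reduction inv w) : {s : S // s ∉ R.deleted} → A := fun s => w s.1

end Reduction

/-- A word is *reduced* if it has no nonempty reduction. -/
def Reduced {S A : Type} [LinearOrder S] (inv : A → A) (w : S → A) : Prop :=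
  ∀ R : Reduction inv w, IsEmpty R.ι

/-- Two words are the same *abstract word* if there is an order-preserving bijection
between their position sets commuting with the labellings. -/
def WordEquiv {S₁ S₂ A : Type} [LinearOrder S₁] [LinearOrder S₂]
    (w₁ : S₁ → A) (w₂ : S₂ → A) : Prop :=
  ∃ e : S₁ ≃o S₂, ∀ s, w₂ (e s) = w₁ s

/-- The alphabet `A = {e⃗₀, e⃖₀, e⃗₁, e⃖₁, …}`: the letter `(b, i)` stands for the
oriented chord `e⃗ᵢ` if `b = true`, and for `e⃖ᵢ` if `b = false`. -/
abbrev Letter := Bool × ℕ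

/-- The fixed-point-free involution pairing each letter with its inverse. -/
def Letter.inv (a : Letter) : Letter := (!a.1, a.2)

/-- The set of positions of `w` whose letters have index in `I`
(the domain of the restricted word `w↾I`). -/
abbrev restDom {S : Type} (w : S → Letter) (I : Set ℕ) : Type := {s : S // (w s).2 ∈ I}

/-- The restriction `w↾I` of a word `w` to the letters with index in `I`. -/
def restr {S : Type} (w : S → Letter) (I : Set ℕ) : restDom w I → Letter :=
  fun s => w s.1

namespace WordEquiv

variable {S₁ S₂ S₃ A : Type} [LinearOrder S₁] [LinearOrder S₂] [LinearOrder S₃]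
  {w₁ : S₁ → A} {w₂ : S₂ → A} {w₃ : S₃ → A}

theorem symm (h : WordEquiv w₁ w₂) : WordEquiv w₂ w₁ := by
  obtain ⟨e, he⟩ := h
  exact ⟨e.symm, fun s => by rw [← he, e.apply_symm_apply]⟩

theorem trans (h : WordEquiv w₁ w₂) (h' : WordEquiv w₂ w₃) : WordEquiv w₁ w₃ := by
  obtain ⟨e, he⟩ := h
  obtain ⟨e', he'⟩ := h'
  exact ⟨e.trans e', fun s => by rw [OrderIso.trans_apply, he', he]⟩

theorem of_strictMono (f : S₁ → S₂) (hf : StrictMono f) (hs : Function.Surjective f)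
    (hw : ∀ s, w₂ (f s) = w₁ s) : WordEquiv w₁ w₂ :=
  ⟨hf.orderIsoOfSurjective f hs, hw⟩

/-- Equivalent words have equivalent restrictions. -/
theorem restr {w₁ : S₁ → Letter} {w₂ : S₂ → Letter} (h : WordEquiv w₁ w₂) (I : Set ℕ) :
    WordEquiv (restr w₁ I) (_root_.restr w₂ I) := by
  obtain ⟨e, he⟩ := h
  refine of_strictMono (fun s => ⟨e s.1, by rw [he]; exact s.2⟩) (fun s t hst => ?_)
    (fun t => ⟨⟨e.symm t.1, ?_⟩, ?_⟩) (fun s => he s.1)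
  · exact e.strictMono hst
  · rw [← he, e.apply_symm_apply]
    exact t.2
  · exact Subtype.ext (e.apply_symm_apply t.1)

end WordEquiv

namespace Reduction

section General

variable {S S' A : Type} [LinearOrder S] [LinearOrder S'] {inv : A → A} {w : S → A} {w' : S' → A}

theorem mem_deleted {R : Reduction inv w} {s : S} :
    s ∈ R.deleted ↔ ∃ i, s = R.fst i ∨ s = R.snd i := by
  simp only [deleted, mem_union, mem_range]
  constructor
  · rintro (⟨i, rfl⟩ | ⟨i, rfl⟩)
    · exact ⟨i, .inl rfl⟩
    · exact ⟨i, .inr rfl⟩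
  · rintro ⟨i, rfl | rfl⟩
    · exact .inl ⟨i, rfl⟩
    · exact .inr ⟨i, rfl⟩

theorem fst_mem_deleted (R : Reduction inv w) (i : R.ι) : R.fst i ∈ R.deleted :=
  .inl ⟨i, rfl⟩

theorem snd_mem_deleted (R : Reduction inv w) (i : R.ι) : R.snd i ∈ R.deleted :=
  .inr ⟨i, rfl⟩

theorem eq_of_fst_eq_fst (R : Reduction inv w) {i j : R.ι} (h : R.fst i = R.fst j) : i = j :=
  by_contra fun hij => (R.disjoint_pairs i j hij).1 h

theorem eq_of_snd_eq_snd (R : Reduction inv w) {i j : R.ι} (h : R.snd i = R.snd j) : i = j :=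
  by_contra fun hij => (R.disjoint_pairs i j hij).2.2.2 h

theorem fst_ne_snd (R : Reduction inv w) (i j : R.ι) : R.fst i ≠ R.snd j := by
  intro h
  by_cases hij : i = j
  · subst hij
    exact (R.fst_lt_snd i).ne h
  · exact (R.disjoint_pairs i j hij).2.1 h

/-- The pairs of a reduction do not cross. -/
theorem exists_pair_of_between (R : Reduction inv w) (i : R.ι) {s : S} (h₁ : R.fst i < s)
    (h₂ : s < R.snd i) :
    ∃ j, (s = R.fst j ∧ R.snd j < R.snd i) ∨ (s = R.snd j ∧ R.fst i < R.fst j) := by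
  obtain ⟨j, hji, rfl | rfl⟩ := R.adjacent i s h₁ h₂
  · refine ⟨j, .inl ⟨rfl, ?_⟩⟩
    by_contra! hle
    have hlt := hle.lt_of_ne fun h => hji.ne' (R.eq_of_snd_eq_snd h)
    obtain ⟨k, hkj, h | h⟩ := R.adjacent j _ h₂ hlt
    · exact R.fst_ne_snd _ _ h.symm
    · exact absurd (R.eq_of_snd_eq_snd h ▸ hkj) hji.not_gt
  · refine ⟨j, .inr ⟨rfl, ?_⟩⟩
    by_contra! hle
    have hlt := hle.lt_of_ne fun h => hji.ne (R.eq_of_fst_eq_fst h)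
    obtain ⟨k, hkj, h | h⟩ := R.adjacent j _ hlt h₁
    · exact absurd (R.eq_of_fst_eq_fst h ▸ hkj) hji.not_gt
    · exact R.fst_ne_snd _ _ h

/-- The reduction deleting nothing. -/
def empty (inv : A → A) (w : S → A) : Reduction inv w where
  ι := Empty
  fst := Empty.elim
  snd := Empty.elim
  fst_lt_snd i := i.elim
  disjoint_pairs i := i.elim
  inv_pair i := i.elim
  adjacent i := i.elim

theorem result_empty : WordEquiv (empty inv w).result w :=
  WordEquiv.of_strictMono Subtype.val (fun _ _ h => h)
    (fun s => ⟨⟨s, fun h => by obtain ⟨i, -⟩ := mem_deleted.1 h; exact i.elim⟩, rfl⟩)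
    (fun _ => rfl)

/-- Transport of a reduction to an equivalent word. -/
def map (R : Reduction inv w) (e : S ≃o S') (he : ∀ s, w' (e s) = w s) : Reduction inv w' where
  ι := R.ι
  fst i := e (R.fst i)
  snd i := e (R.snd i)
  fst_lt_snd i := e.strictMono (R.fst_lt_snd i)
  disjoint_pairs i j hij := by simpa using R.disjoint_pairs i j hij
  inv_pair i := by rw [he, he, R.inv_pair]
  adjacent i s h₁ h₂ := by
    obtain ⟨s, rfl⟩ := e.surjective s
    simpa using R.adjacent i s (e.lt_iff_lt.1 h₁) (e.lt_iff_lt.1 h₂)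

theorem map_mem_deleted (R : Reduction inv w) (e : S ≃o S') (he : ∀ s, w' (e s) = w s) (s : S) :
    e s ∈ (R.map e he).deleted ↔ s ∈ R.deleted := by
  rw [mem_deleted, mem_deleted]
  simp [map]

theorem result_map (R : Reduction inv w) (e : S ≃o S') (he : ∀ s, w' (e s) = w s) :
    WordEquiv R.result (R.map e he).result := by
  refine WordEquiv.of_strictMono
    (fun s => ⟨e s.1, fun h => s.2 ((R.map_mem_deleted e he _).1 h)⟩)
    (fun s t hst => e.strictMono hst) ?_ (fun s => he s.1)
  rintro ⟨t, ht⟩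
  obtain ⟨s, rfl⟩ := e.surjective t
  exact ⟨⟨s, fun h => ht ((R.map_mem_deleted e he _).2 h)⟩, rfl⟩

/-- Performing one reduction after another. -/
def comp (R : Reduction inv w) (T : Reduction inv R.result) : Reduction inv w where
  ι := R.ι ⊕ₗ T.ι
  fst i := Sum.elim R.fst (fun j => (T.fst j).1) (ofLex i)
  snd i := Sum.elim R.snd (fun j => (T.snd j).1) (ofLex i)
  fst_lt_snd := by
    rintro (i | i)
    · exact R.fst_lt_snd i
    · exact T.fst_lt_snd i
  disjoint_pairs := by
    have key (i : R.ι) (s : {s // s ∉ R.deleted}) : R.fst i ≠ s ∧ R.snd i ≠ s :=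
      ⟨fun h => s.2 (h ▸ R.fst_mem_deleted i), fun h => s.2 (h ▸ R.snd_mem_deleted i)⟩
    rintro (i | i) (j | j) hij
    · exact R.disjoint_pairs i j (fun h => hij (h ▸ rfl))
    · exact ⟨(key i _).1, (key i _).1, (key i _).2, (key i _).2⟩
    · exact ⟨(key j _).1.symm, (key j _).2.symm, (key j _).1.symm, (key j _).2.symm⟩
    · have h := T.disjoint_pairs i j (fun h => hij (h ▸ rfl))
      simp only [ne_eq, Subtype.ext_iff] at h
      exact h
  inv_pair := by
    rintro (i | i)
    · exact R.inv_pair i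
    · exact T.inv_pair i
  adjacent := by
    rintro (i | i) s h₁ h₂
    · obtain ⟨j, hj, h⟩ := R.adjacent i s h₁ h₂
      exact ⟨toLex (.inl j), Sum.Lex.inl_lt_inl_iff.2 hj, h⟩
    · by_cases hs : s ∈ R.deleted
      · obtain ⟨j, hj⟩ := mem_deleted.1 hs
        exact ⟨toLex (.inl j), Sum.Lex.inl_lt_inr _ _, hj⟩
      · obtain ⟨j, hj, h⟩ := T.adjacent i ⟨s, hs⟩ h₁ h₂
        simp only [Subtype.ext_iff] at h
        exact ⟨toLex (.inr j), Sum.Lex.inr_lt_inr_iff.2 hj, h⟩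

theorem mem_deleted_comp (R : Reduction inv w) (T : Reduction inv R.result) (s : S) :
    s ∈ (R.comp T).deleted ↔ s ∈ R.deleted ∨ ∃ h : s ∉ R.deleted, ⟨s, h⟩ ∈ T.deleted := by
  simp only [mem_deleted (R := R.comp T), mem_deleted (R := T)]
  constructor
  · rintro ⟨i | i, h⟩
    · exact .inl (mem_deleted.2 ⟨i, h⟩)
    · have hs : s ∉ R.deleted := by
        rcases h with rfl | rfl
        · exact (T.fst i).2
        · exact (T.snd i).2
      exact .inr ⟨hs, i, h.imp Subtype.ext Subtype.ext⟩
  · rintro (h | ⟨hs, i, h⟩)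
    · obtain ⟨i, hi⟩ := mem_deleted.1 h
      exact ⟨toLex (.inl i), hi⟩
    · exact ⟨toLex (.inr i), h.imp (congrArg Subtype.val) (congrArg Subtype.val)⟩

theorem result_comp (R : Reduction inv w) (T : Reduction inv R.result) :
    WordEquiv T.result (R.comp T).result := by
  refine WordEquiv.of_strictMono
    (fun s => ⟨s.1.1, fun h => ?_⟩) (fun s t hst => hst) ?_ (fun s => rfl)
  · rcases (R.mem_deleted_comp T _).1 h with h | ⟨_, h⟩
    · exact s.1.2 h
    · exact s.2 h
  · rintro ⟨s, hs⟩
    rw [mem_deleted_comp, not_or] at hs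
    exact ⟨⟨⟨s, hs.1⟩, fun h => hs.2 ⟨hs.1, h⟩⟩, rfl⟩

end General

end Reduction

theorem Reduced.of_wordEquiv {S S' A : Type} [LinearOrder S] [LinearOrder S'] {inv : A → A}
    {w : S → A} {w' : S' → A} (h : Reduced inv w) (hw : WordEquiv w w') : Reduced inv w' := by
  obtain ⟨e, he⟩ := hw.symm
  exact fun R => h (R.map e he)

/-- Every finite word can be reduced to a reduced word. -/
theorem exists_reduced_result {A : Type} (inv : A → A) {S : Type} [LinearOrder S] [Finite S]
    (w : S → A) : ∃ R : Reduction inv w, Reduced inv R.result := by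
  induction h : Nat.card S using Nat.strong_induction_on generalizing S with
  | _ n ih =>
    by_cases hw : Reduced inv w
    · exact ⟨.empty inv w, hw.of_wordEquiv Reduction.result_empty.symm⟩
    · obtain ⟨R, hR⟩ := not_forall.1 hw
      obtain ⟨i⟩ := not_isEmpty_iff.1 hR
      obtain ⟨T, hT⟩ := ih _ (h ▸ Finite.card_subtype_lt (not_not.2 (R.fst_mem_deleted i)))
        R.result rfl
      exact ⟨R.comp T, hT.of_wordEquiv (R.result_comp T)⟩

/-- Words that reduce to the same word and one of which is finite reduce to the same
reduced word. -/
theorem exists_common_reduced_result {S S' A : Type} [LinearOrder S] [LinearOrder S'] [Finite S]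
    {inv : A → A} {w : S → A} {w' : S' → A} (R : Reduction inv w) (R' : Reduction inv w')
    (h : WordEquiv R.result R'.result) :
    ∃ (Q : Reduction inv w) (Q' : Reduction inv w'),
      Reduced inv Q.result ∧ Reduced inv Q'.result ∧ WordEquiv Q.result Q'.result := by
  obtain ⟨T, hT⟩ := exists_reduced_result inv R.result
  obtain ⟨e, he⟩ := h
  have hQ := R.result_comp T
  have hQ' := (T.result_map e he).trans (R'.result_comp (T.map e he))
  exact ⟨R.comp T, R'.comp (T.map e he), hT.of_wordEquiv hQ, hT.of_wordEquiv hQ',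
    hQ.symm.trans hQ'⟩

theorem finite_restDom {S : Type} {w : S → Letter} (hfib : ∀ a, {s | w s = a}.Finite)
    (I : Finset ℕ) : Finite (restDom w (I : Set ℕ)) := by
  refine Set.Finite.subset ((Finset.univ ×ˢ I : Finset Letter).finite_toSet.biUnion
    fun a _ => hfib a) fun s hs => ?_
  simpa using (show (w s).2 ∈ (I : Set ℕ) from hs)

namespace Reduction

variable {S : Type} [LinearOrder S] {w : S → Letter}

/-- The restriction of a reduction to the letters with index in `I`. -/
def restrict (R : Reduction Letter.inv w) (I : Set ℕ) : Reduction Letter.inv (restr w I) where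
  ι := {i : R.ι // (w (R.fst i)).2 ∈ I}
  fst i := ⟨R.fst i.1, i.2⟩
  snd i := ⟨R.snd i.1, by rw [R.inv_pair]; exact i.2⟩
  fst_lt_snd i := R.fst_lt_snd i.1
  disjoint_pairs i j hij := by
    simpa only [ne_eq, Subtype.ext_iff] using R.disjoint_pairs i.1 j.1 (Subtype.coe_ne_coe.2 hij)
  inv_pair i := R.inv_pair i.1
  adjacent i s h₁ h₂ := by
    obtain ⟨j, hj, h⟩ := R.adjacent i.1 s.1 h₁ h₂
    have hjI : (w (R.fst j)).2 ∈ I := by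
      have hs := s.2
      rcases h with h | h
      · rwa [h] at hs
      · rwa [h, R.inv_pair] at hs
    exact ⟨⟨j, hjI⟩, hj, by simpa only [Subtype.ext_iff] using h⟩

theorem mem_deleted_restrict (R : Reduction Letter.inv w) (I : Set ℕ) (s : restDom w I) :
    s ∈ (R.restrict I).deleted ↔ s.1 ∈ R.deleted := by
  rw [mem_deleted, mem_deleted]
  constructor
  · rintro ⟨i, h⟩
    exact ⟨i.1, h.imp (congrArg _) (congrArg _)⟩
  · rintro ⟨j, h⟩
    have hjI : (w (R.fst j)).2 ∈ I := by
      have hs := s.2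
      rcases h with h | h
      · rwa [h] at hs
      · rwa [h, R.inv_pair] at hs
    exact ⟨⟨j, hjI⟩, h.imp Subtype.ext Subtype.ext⟩

theorem result_restrict (R : Reduction Letter.inv w) (I : Set ℕ) :
    WordEquiv (R.restrict I).result (restr R.result I) := by
  refine WordEquiv.of_strictMono
    (fun s => ⟨⟨s.1.1, fun h => s.2 ((R.mem_deleted_restrict I _).2 h)⟩, s.1.2⟩)
    (fun s t hst => hst) ?_ (fun s => rfl)
  rintro ⟨⟨s, hs⟩, hI⟩
  exact ⟨⟨⟨s, hI⟩, fun h => hs ((R.mem_deleted_restrict I _).1 h)⟩, rfl⟩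

end Reduction

/-- `M` is a noncrossing matching of mutually inverse letters of `w` (where `M a b` implies
`a < b`) such that every position with index in `I` enclosed by a pair of `M` is matched. -/
structure IsReductionRel {S : Type} [LinearOrder S] (w : S → Letter) (I : Set ℕ)
    (M : S → S → Prop) : Prop where
  lt : ∀ {a b}, M a b → a < b
  inv : ∀ {a b}, M a b → w b = Letter.inv (w a)
  snd_unique : ∀ {a b c}, M a b → M a c → b = c
  fst_unique : ∀ {a b c}, M a c → M b c → a = b
  not_chain : ∀ {a b c}, M a b → ¬ M b c
  nested : ∀ {a b c}, M a b → a < c → c < b → (w c).2 ∈ I →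
    ∃ d, (M c d ∨ M d c) ∧ a < d ∧ d < b

/-- `N` is an order-preserving and label-preserving correspondence between the positions of
`w` and `w'` with index in `I` that are not matched by `M` and `M'`, respectively. -/
structure IsResultRel {S S' : Type} [LinearOrder S] [LinearOrder S'] (w : S → Letter)
    (w' : S' → Letter) (I : Set ℕ) (M : S → S → Prop) (M' : S' → S' → Prop)
    (N : S → S' → Prop) : Prop where
  label : ∀ {a b}, N a b → w' b = w a
  lt_iff : ∀ {a b a' b'}, N a b → N a' b' → (a < a' ↔ b < b')
  cover_left : ∀ a, (w a).2 ∈ I → (∃ d, M a d ∨ M d a) ∨ ∃ b, N a b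
  cover_right : ∀ b, (w' b).2 ∈ I → (∃ d, M' b d ∨ M' d b) ∨ ∃ a, N a b
  disjoint_left : ∀ {a b d}, N a b → ¬ (M a d ∨ M d a)
  disjoint_right : ∀ {a b d}, N a b → ¬ (M' b d ∨ M' d b)

theorem Letter.inv_inv (a : Letter) : a.inv.inv = a := by
  simp [Letter.inv]

/-- The relation matching the two elements of each pair of a reduction of `w↾I`. -/
def Reduction.rel {S : Type} [LinearOrder S] {w : S → Letter} {I : Set ℕ}
    (Q : Reduction Letter.inv (restr w I)) (a b : S) : Prop :=
  ∃ i, (Q.fst i).1 = a ∧ (Q.snd i).1 = b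

theorem Reduction.isReductionRel_rel {S : Type} [LinearOrder S] {w : S → Letter} {I : Set ℕ}
    (Q : Reduction Letter.inv (restr w I)) : IsReductionRel w I Q.rel where
  lt := by
    rintro _ _ ⟨i, rfl, rfl⟩
    exact Q.fst_lt_snd i
  inv := by
    rintro _ _ ⟨i, rfl, rfl⟩
    exact Q.inv_pair i
  snd_unique := by
    rintro _ _ _ ⟨i, rfl, rfl⟩ ⟨j, h, rfl⟩
    rw [Q.eq_of_fst_eq_fst (Subtype.ext h)]
  fst_unique := by
    rintro _ _ _ ⟨i, rfl, rfl⟩ ⟨j, rfl, h⟩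
    rw [Q.eq_of_snd_eq_snd (Subtype.ext h)]
  not_chain := by
    rintro _ _ _ ⟨i, rfl, rfl⟩ ⟨j, h, rfl⟩
    exact Q.fst_ne_snd _ _ (Subtype.ext h)
  nested := by
    rintro _ _ c ⟨i, rfl, rfl⟩ h₁ h₂ hc
    obtain ⟨j, ⟨h, hlt⟩ | ⟨h, hlt⟩⟩ := Q.exists_pair_of_between i (s := ⟨c, hc⟩) h₁ h₂
    · rw [Subtype.ext_iff] at h
      subst h
      exact ⟨(Q.snd j).1, .inl ⟨j, rfl, rfl⟩, h₁.trans (Q.fst_lt_snd j), hlt⟩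
    · rw [Subtype.ext_iff] at h
      subst h
      exact ⟨(Q.fst j).1, .inr ⟨j, rfl, rfl⟩, hlt, lt_trans (Q.fst_lt_snd j) h₂⟩

theorem Reduction.mem_deleted_iff_rel {S : Type} [LinearOrder S] {w : S → Letter} {I : Set ℕ}
    (Q : Reduction Letter.inv (restr w I)) (s : restDom w I) :
    s ∈ Q.deleted ↔ ∃ d, Q.rel s d ∨ Q.rel d s := by
  rw [mem_deleted]
  constructor
  · rintro ⟨i, rfl | rfl⟩
    · exact ⟨_, .inl ⟨i, rfl, rfl⟩⟩
    · exact ⟨_, .inr ⟨i, rfl, rfl⟩⟩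
  · rintro ⟨d, ⟨i, h, -⟩ | ⟨i, -, h⟩⟩
    · exact ⟨i, .inl (Subtype.ext h.symm)⟩
    · exact ⟨i, .inr (Subtype.ext h.symm)⟩

theorem exists_isResultRel {S S' : Type} [LinearOrder S] [LinearOrder S'] {w : S → Letter}
    {w' : S' → Letter} {I : Set ℕ} (Q : Reduction Letter.inv (restr w I))
    (Q' : Reduction Letter.inv (restr w' I)) (h : WordEquiv Q.result Q'.result) :
    ∃ N, IsResultRel w w' I Q.rel Q'.rel N := by
  obtain ⟨e, he⟩ := h
  refine ⟨fun a b => ∃ s, s.1.1 = a ∧ (e s).1.1 = b, ?_, ?_, ?_, ?_, ?_, ?_⟩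
  · rintro _ _ ⟨s, rfl, rfl⟩
    exact he s
  · rintro _ _ _ _ ⟨s, rfl, rfl⟩ ⟨t, rfl, rfl⟩
    exact (e.lt_iff_lt (x := s) (y := t)).symm
  · intro a ha
    by_cases h : (⟨a, ha⟩ : restDom w I) ∈ Q.deleted
    · exact .inl ((Q.mem_deleted_iff_rel _).1 h)
    · exact .inr ⟨_, ⟨_, h⟩, rfl, rfl⟩
  · intro b hb
    by_cases h : (⟨b, hb⟩ : restDom w' I) ∈ Q'.deleted
    · exact .inl ((Q'.mem_deleted_iff_rel _).1 h)
    · exact .inr ⟨_, e.symm ⟨_, h⟩, rfl, by rw [e.apply_symm_apply]⟩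
  · rintro _ _ d ⟨s, rfl, rfl⟩ h
    exact s.2 ((Q.mem_deleted_iff_rel _).2 ⟨d, h⟩)
  · rintro _ _ d ⟨s, rfl, rfl⟩ h
    exact (e s).2 ((Q'.mem_deleted_iff_rel _).2 ⟨d, h⟩)

namespace IsReductionRel

variable {S : Type} [LinearOrder S] {w : S → Letter} {M : S → S → Prop}

/-- The reduction with set of pairs `M`, ordered by a linear extension of the nesting order. -/
def toReduction (hM : IsReductionRel w univ M) : Reduction Letter.inv w where
  ι := LinearExtension {p : Sᵒᵈ × S // M (OrderDual.ofDual p.1) p.2}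
  fst p := OrderDual.ofDual p.1.1
  snd p := p.1.2
  fst_lt_snd p := hM.lt p.2
  disjoint_pairs := by
    rintro ⟨⟨a, b⟩, h⟩ ⟨⟨a', b'⟩, h'⟩ hne
    change M a b at h
    change M a' b' at h'
    change a ≠ a' ∧ a ≠ b' ∧ b ≠ a' ∧ b ≠ b'
    refine ⟨?_, ?_, ?_, ?_⟩
    · rintro rfl
      obtain rfl := hM.snd_unique h h'
      exact hne rfl
    · rintro rfl
      exact hM.not_chain h' h
    · rintro rfl
      exact hM.not_chain h h'
    · rintro rfl
      obtain rfl := hM.fst_unique h h'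
      exact hne rfl
  inv_pair p := hM.inv p.2
  adjacent := by
    rintro ⟨⟨a, b⟩, h⟩ c h₁ h₂
    obtain ⟨a, rfl⟩ := OrderDual.toDual.surjective a
    change M a b at h
    change a < c at h₁
    change c < b at h₂
    have key {x y : S} (hxy : M x y) (hx : a < x) (hy : y < b) :
        toLinearExtension (⟨(OrderDual.toDual x, y), hxy⟩ :
          {p : Sᵒᵈ × S // M (OrderDual.ofDual p.1) p.2}) <
        toLinearExtension (⟨(OrderDual.toDual a, b), h⟩ :
          {p : Sᵒᵈ × S // M (OrderDual.ofDual p.1) p.2}) := by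
      refine lt_of_le_of_ne (toLinearExtension.monotone ⟨hx.le, hy.le⟩) fun heq => hx.ne' ?_
      exact congrArg (fun p : {p : Sᵒᵈ × S // M (OrderDual.ofDual p.1) p.2} =>
        OrderDual.ofDual p.1.1) heq
    obtain ⟨d, hd | hd, h₃, h₄⟩ := hM.nested h h₁ h₂ (mem_univ _)
    · exact ⟨_, key hd h₁ h₄, .inl rfl⟩
    · exact ⟨_, key hd h₃ h₂, .inr rfl⟩

theorem mem_deleted_toReduction (hM : IsReductionRel w univ M) (s : S) :
    s ∈ hM.toReduction.deleted ↔ ∃ d, M s d ∨ M d s := by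
  rw [Reduction.mem_deleted]
  constructor
  · rintro ⟨⟨⟨a, b⟩, h⟩, rfl | rfl⟩
    · exact ⟨b, .inl h⟩
    · exact ⟨a, .inr h⟩
  · rintro ⟨d, h | h⟩
    · exact ⟨toLinearExtension ⟨(OrderDual.toDual s, d), h⟩, .inl rfl⟩
    · exact ⟨toLinearExtension ⟨(OrderDual.toDual d, s), h⟩, .inr rfl⟩

end IsReductionRel

theorem IsResultRel.wordEquiv {S S' : Type} [LinearOrder S] [LinearOrder S'] {w : S → Letter}
    {w' : S' → Letter} {M : S → S → Prop} {M' : S' → S' → Prop} {N : S → S' → Prop}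
    (hN : IsResultRel w w' univ M M' N) (hM : IsReductionRel w univ M)
    (hM' : IsReductionRel w' univ M') :
    WordEquiv hM.toReduction.result hM'.toReduction.result := by
  have hex (s : {s // s ∉ hM.toReduction.deleted}) : ∃ b, N s b := by
    have hs := s.2
    rw [hM.mem_deleted_toReduction] at hs
    exact (hN.cover_left s.1 (mem_univ _)).resolve_left hs
  choose f hf using hex
  refine WordEquiv.of_strictMono (fun s => ⟨f s, fun h => ?_⟩)
    (fun s t hst => (hN.lt_iff (hf s) (hf t)).1 hst) ?_ (fun s => hN.label (hf s))
  · obtain ⟨d, hd⟩ := (hM'.mem_deleted_toReduction _).1 h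
    exact hN.disjoint_right (hf s) hd
  · rintro ⟨b, hb⟩
    rw [hM'.mem_deleted_toReduction] at hb
    obtain ⟨a, ha⟩ := (hN.cover_right b (mem_univ _)).resolve_left hb
    have ha' : a ∉ hM.toReduction.deleted := by
      rw [hM.mem_deleted_toReduction]
      rintro ⟨d, hd⟩
      exact hN.disjoint_left ha hd
    refine ⟨⟨a, ha'⟩, Subtype.ext (le_antisymm ?_ ?_)⟩
    · exact not_lt.1 fun h => lt_irrefl a ((hN.lt_iff ha (hf ⟨a, ha'⟩)).2 h)
    · exact not_lt.1 fun h => lt_irrefl a ((hN.lt_iff (hf ⟨a, ha'⟩) ha).2 h)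

section Limit

open Filter

/-- An ultrafilter on the finite sets of indices converging to infinity. -/
def indexUltrafilter : Ultrafilter (Finset ℕ) := Ultrafilter.of atTop

theorem eventually_mem_index (n : ℕ) : ∀ᶠ I : Finset ℕ in indexUltrafilter, n ∈ (I : Set ℕ) :=
  (eventually_ge_atTop {n}).filter_mono (Ultrafilter.of_le atTop) |>.mono
    fun _ hI => hI (Finset.mem_singleton_self n)

theorem Ultrafilter.exists_eventually_of_finite {α β : Type*} (U : Ultrafilter α)
    {F : Set β} (hF : F.Finite) {P : α → β → Prop} (h : ∀ᶠ x in U, ∃ y ∈ F, P x y) :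
    ∃ y, ∀ᶠ x in U, P x y := by
  obtain ⟨y, -, hy⟩ := (Ultrafilter.eventually_exists_mem_iff hF).1 h
  exact ⟨y, hy⟩

variable {S S' : Type} [LinearOrder S] [LinearOrder S'] {w : S → Letter} {w' : S' → Letter}
  {M : Finset ℕ → S → S → Prop} {M' : Finset ℕ → S' → S' → Prop} {N : Finset ℕ → S → S' → Prop}

theorem IsReductionRel.eq_inv_of_or {I : Set ℕ} {M : S → S → Prop} (hM : IsReductionRel w I M)
    {c d : S} (h : M c d ∨ M d c) : w d = Letter.inv (w c) := by
  rcases h with h | h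
  · exact hM.inv h
  · rw [hM.inv h, Letter.inv_inv]

theorem IsReductionRel.limit (hfib : ∀ a, {s | w s = a}.Finite)
    (hM : ∀ I : Finset ℕ, IsReductionRel w I (M I)) :
    IsReductionRel w univ fun a b => ∀ᶠ I in indexUltrafilter, M I a b where
  lt h := let ⟨I, hI⟩ := h.exists; (hM I).lt hI
  inv h := let ⟨I, hI⟩ := h.exists; (hM I).inv hI
  snd_unique h h' := let ⟨I, hI, hI'⟩ := (h.and h').exists; (hM I).snd_unique hI hI'
  fst_unique h h' := let ⟨I, hI, hI'⟩ := (h.and h').exists; (hM I).fst_unique hI hI'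
  not_chain h h' := let ⟨I, hI, hI'⟩ := (h.and h').exists; (hM I).not_chain hI hI'
  nested := by
    intro a b c h h₁ h₂ _
    obtain ⟨d, hd⟩ := indexUltrafilter.exists_eventually_of_finite (hfib (w c).inv)
      (P := fun I d => (M I c d ∨ M I d c) ∧ a < d ∧ d < b) (by
        filter_upwards [h, eventually_mem_index (w c).2] with I hI hc
        obtain ⟨d, hd, hlt⟩ := (hM I).nested hI h₁ h₂ hc
        exact ⟨d, (hM I).eq_inv_of_or hd, hd, hlt⟩)
    obtain ⟨I, -, hlt⟩ := hd.exists
    exact ⟨d, Ultrafilter.eventually_or.1 (hd.mono fun _ h => h.1), hlt⟩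

theorem IsResultRel.limit (hfib : ∀ a, {s | w s = a}.Finite) (hfib' : ∀ a, {s | w' s = a}.Finite)
    (hM : ∀ I : Finset ℕ, IsReductionRel w I (M I))
    (hM' : ∀ I : Finset ℕ, IsReductionRel w' I (M' I))
    (hN : ∀ I : Finset ℕ, IsResultRel w w' I (M I) (M' I) (N I)) :
    IsResultRel w w' univ (fun a b => ∀ᶠ I in indexUltrafilter, M I a b)
      (fun a b => ∀ᶠ I in indexUltrafilter, M' I a b)
      (fun a b => ∀ᶠ I in indexUltrafilter, N I a b) where
  label h := let ⟨I, hI⟩ := h.exists; (hN I).label hI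
  lt_iff h h' := let ⟨I, hI, hI'⟩ := (h.and h').exists; (hN I).lt_iff hI hI'
  cover_left a _ := by
    refine (Ultrafilter.eventually_or.1 ((eventually_mem_index _).mono fun I hI =>
      (hN I).cover_left a hI)).imp (fun h => ?_) fun h => ?_
    · obtain ⟨d, hd⟩ := indexUltrafilter.exists_eventually_of_finite (hfib (w a).inv)
        (h.mono fun I ⟨d, hd⟩ => ⟨d, (hM I).eq_inv_of_or hd, hd⟩)
      exact ⟨d, Ultrafilter.eventually_or.1 hd⟩
    · exact indexUltrafilter.exists_eventually_of_finite (hfib' (w a))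
        (h.mono fun I ⟨b, hb⟩ => ⟨b, (hN I).label hb, hb⟩)
  cover_right b _ := by
    refine (Ultrafilter.eventually_or.1 ((eventually_mem_index _).mono fun I hI =>
      (hN I).cover_right b hI)).imp (fun h => ?_) fun h => ?_
    · obtain ⟨d, hd⟩ := indexUltrafilter.exists_eventually_of_finite (hfib' (w' b).inv)
        (h.mono fun I ⟨d, hd⟩ => ⟨d, (hM' I).eq_inv_of_or hd, hd⟩)
      exact ⟨d, Ultrafilter.eventually_or.1 hd⟩
    · exact indexUltrafilter.exists_eventually_of_finite (hfib (w' b))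
        (h.mono fun I ⟨a, ha⟩ => ⟨a, ((hN I).label ha).symm, ha⟩)
  disjoint_left h h' :=
    let ⟨I, hI, hI'⟩ := (h.and (Ultrafilter.eventually_or.2 h')).exists
    (hN I).disjoint_left hI hI'
  disjoint_right h h' :=
    let ⟨I, hI, hI'⟩ := (h.and (Ultrafilter.eventually_or.2 h')).exists
    (hN I).disjoint_right hI hI'

end Limit

/-- Lemma `reduceonI`. Two words `w, w'` in the alphabet
`A = {e⃗ᵢ, e⃖ᵢ : i ∈ ℕ}` (countable totally ordered domains, finite fibers) can be
reduced to the same abstract word if and only if for every finite `I ⊆ ℕ` the finite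
restrictions `w↾I` and `w'↾I` have the same (unique) reduced form `r(w↾I) = r(w'↾I)`. -/
theorem statement11 {S S' : Type} [LinearOrder S] [Countable S]
    [LinearOrder S'] [Countable S']
    (w : S → Letter) (w' : S' → Letter)
    (hfib : ∀ a : Letter, {s | w s = a}.Finite)
    (hfib' : ∀ a : Letter, {s | w' s = a}.Finite) :
    (∃ (R : Reduction Letter.inv w) (R' : Reduction Letter.inv w'),
        WordEquiv R.result R'.result) ↔
      ∀ I : Finset ℕ,
        ∃ (Q : Reduction Letter.inv (restr w (I : Set ℕ)))
          (Q' : Reduction Letter.inv (restr w' (I : Set ℕ))),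
          Reduced Letter.inv Q.result ∧ Reduced Letter.inv Q'.result ∧
          WordEquiv Q.result Q'.result := by
  constructor
  · rintro ⟨R, R', h⟩ I
    have := finite_restDom hfib I
    exact exists_common_reduced_result (R.restrict I) (R'.restrict I)
      ((R.result_restrict I).trans ((h.restr I).trans (R'.result_restrict I).symm))
  · intro h
    choose Q Q' _ _ hQ using h
    choose N hN using fun I => exists_isResultRel (Q I) (Q' I) (hQ I)
    have hM := fun I => (Q I).isReductionRel_rel
    have hM' := fun I => (Q' I).isReductionRel_rel
    exact ⟨_, _, (IsResultRel.limit hfib hfib' hM hM' hN).wordEquiv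
      (IsReductionRel.limit hfib hM) (IsReductionRel.limit hfib' hM')⟩
end
end

section
/- Every (possibly infinite) word w: S → A in the alphabet A = {e⃗_i, e⃖_i : i ∈ ℕ} (countable totally ordered domain, finite fibers) reduces to a unique reduced word. -/
open Set

noncomputable section

/-- A symmetric partial matching of mutually inverse letters of `w` which matches every position
lying between two matched positions with another such position. -/
structure IsMatching {S A : Type} [LinearOrder S] (inv : A → A) (w : S → A)
    (G : Set (S × S)) : Prop where
  symm : ∀ {a b}, (a, b) ∈ G → (b, a) ∈ G
  unique : ∀ {a b c}, (a, b) ∈ G → (a, c) ∈ G → b = c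
  ne : ∀ {a b}, (a, b) ∈ G → a ≠ b
  label : ∀ {a b}, (a, b) ∈ G → w b = inv (w a)
  nested : ∀ {a b s}, (a, b) ∈ G → a < s → s < b → ∃ t, (s, t) ∈ G ∧ a < t ∧ t < b

section Matching

variable {S A : Type} [LinearOrder S] {inv : A → A} {w : S → A}

/-- The set of pairs of a reduction, as a symmetric relation. -/
def Reduction.pairs (R : Reduction inv w) : Set (S × S) :=
  {p | ∃ i, p = (R.fst i, R.snd i) ∨ p = (R.snd i, R.fst i)}

lemma Reduction.mem_deleted_iff (R : Reduction inv w) (s : S) :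
    s ∈ R.deleted ↔ ∃ t, (s, t) ∈ R.pairs := by
  constructor
  · rintro (⟨i, rfl⟩ | ⟨i, rfl⟩)
    · exact ⟨_, i, Or.inl rfl⟩
    · exact ⟨_, i, Or.inr rfl⟩
  · rintro ⟨t, i, h | h⟩
    · exact Or.inl ⟨i, (congrArg Prod.fst h).symm⟩
    · exact Or.inr ⟨i, (congrArg Prod.fst h).symm⟩

lemma Reduction.eq_of_fst_eq_snd_or (R : Reduction inv w) {i j : R.ι}
    (h : R.fst i = R.fst j ∨ R.fst i = R.snd j ∨ R.snd i = R.fst j ∨ R.snd i = R.snd j) :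
    i = j := by
  by_contra hij
  have := R.disjoint_pairs i j hij
  tauto

lemma Reduction.isMatching (hinv : Function.Involutive inv) (R : Reduction inv w) :
    IsMatching inv w R.pairs where
  symm := by
    rintro a b ⟨i, h | h⟩
    · exact ⟨i, Or.inr (by grind)⟩
    · exact ⟨i, Or.inl (by grind)⟩
  unique := by
    rintro a b c ⟨i, h⟩ ⟨j, h'⟩
    have hij : i = j := R.eq_of_fst_eq_snd_or (by grind)
    subst hij
    have := (R.fst_lt_snd i).ne
    grind
  ne := by
    rintro a b ⟨i, h⟩
    have := (R.fst_lt_snd i).ne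
    grind
  label := by
    rintro a b ⟨i, h⟩
    have := R.inv_pair i
    have := hinv (w (R.fst i))
    grind
  nested := by
    rintro a b s ⟨i, h⟩ has hsb
    have hlt := R.fst_lt_snd i
    obtain ⟨rfl, rfl⟩ : a = R.fst i ∧ b = R.snd i := by
      rcases h with h | h
      · simpa using h
      · simp only [Prod.mk.injEq] at h
        exact absurd (has.trans hsb) (by rw [h.1, h.2]; exact hlt.not_gt)
    obtain ⟨j, hji, hj⟩ := R.adjacent i s has hsb
    have hne := R.disjoint_pairs i j hji.ne'
    have hltj := R.fst_lt_snd j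
    have no (s : S) (hs : s = R.fst i ∨ s = R.snd i) : ¬ (R.fst j < s ∧ s < R.snd j) := by
      rintro ⟨h1, h2⟩
      obtain ⟨k, hkj, hk⟩ := R.adjacent j s h1 h2
      have : i = k := R.eq_of_fst_eq_snd_or (by grind)
      exact (hkj.trans hji).ne this.symm
    have n1 := no _ (Or.inl rfl)
    have n2 := no _ (Or.inr rfl)
    rcases hj with rfl | rfl
    · refine ⟨R.snd j, ⟨j, Or.inl rfl⟩, has.trans hltj, ?_⟩
      exact lt_of_le_of_ne (not_lt.1 fun h => n2 ⟨hsb, h⟩) hne.2.2.2.symm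
    · refine ⟨R.fst j, ⟨j, Or.inr rfl⟩, ?_, hltj.trans hsb⟩
      exact lt_of_le_of_ne (not_lt.1 fun h => n1 ⟨h, has⟩) hne.1

/-- The pairs of a matching with the elements listed in increasing order. -/
structure OrderedPair (G : Set (S × S)) where
  left : S
  right : S
  mem : (left, right) ∈ G
  lt : left < right

/-- Ordered pairs are ordered by inclusion of the intervals which they span. -/
instance (G : Set (S × S)) : PartialOrder (OrderedPair G) :=
  PartialOrder.lift (β := Sᵒᵈ × S) (fun p => (OrderDual.toDual p.left, p.right)) (by
    rintro ⟨a, b, _, _⟩ ⟨c, d, _, _⟩ h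
    simpa using h)

/-- A matching gives a reduction, by linearly extending the inclusion order of its pairs. -/
def IsMatching.reduction {G : Set (S × S)} (hG : IsMatching inv w G) : Reduction inv w where
  ι := LinearExtension (OrderedPair G)
  fst := OrderedPair.left
  snd := OrderedPair.right
  fst_lt_snd := OrderedPair.lt
  disjoint_pairs := by
    rintro ⟨a, b, h, hab⟩ ⟨c, d, h', hcd⟩ hne
    dsimp only
    have h₁ := hG.symm h
    have h₁' := hG.symm h'
    refine ⟨?_, ?_, ?_, ?_⟩ <;> rintro rfl
    · obtain rfl := hG.unique h h'
      exact hne rfl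
    · obtain rfl := hG.unique h h₁'
      exact hab.not_gt hcd
    · obtain rfl := hG.unique h₁ h'
      exact hab.not_gt hcd
    · obtain rfl := hG.unique h₁ h₁'
      exact hne rfl
  inv_pair p := hG.label (OrderedPair.mem p)
  adjacent := by
    intro (p : OrderedPair G) s has hsb
    have below (q : OrderedPair G) (hl : p.left < q.left) (hr : q.right < p.right) :
        toLinearExtension q < toLinearExtension p :=
      lt_of_le_of_ne (toLinearExtension.monotone ⟨hl.le, hr.le⟩)
        fun e => hl.ne' (congrArg OrderedPair.left e)
    obtain ⟨t, hst, hat, htb⟩ := hG.nested p.mem has hsb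
    rcases lt_or_gt_of_ne (hG.ne hst) with hlt | hlt
    · exact ⟨_, below ⟨s, t, hst, hlt⟩ has htb, Or.inl rfl⟩
    · exact ⟨_, below ⟨t, s, hG.symm hst, hlt⟩ hat hsb, Or.inr rfl⟩

lemma IsMatching.mem_deleted_iff {G : Set (S × S)} (hG : IsMatching inv w G) (s : S) :
    s ∈ hG.reduction.deleted ↔ ∃ t, (s, t) ∈ G := by
  constructor
  · rintro (⟨p, rfl⟩ | ⟨p, rfl⟩)
    · exact ⟨_, OrderedPair.mem p⟩
    · exact ⟨_, hG.symm (OrderedPair.mem p)⟩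
  · rintro ⟨t, h⟩
    rcases lt_or_gt_of_ne (hG.ne h) with hlt | hlt
    · exact Or.inl ⟨(⟨s, t, h, hlt⟩ : OrderedPair G), rfl⟩
    · exact Or.inr ⟨(⟨t, s, hG.symm h, hlt⟩ : OrderedPair G), rfl⟩

lemma Reduced.notMem_matching (hw : Reduced inv w) {G : Set (S × S)} (hG : IsMatching inv w G)
    (a b : S) : (a, b) ∉ G := by
  intro h
  have := hw hG.reduction
  rcases (hG.mem_deleted_iff a).2 ⟨b, h⟩ with ⟨p, -⟩ | ⟨p, -⟩ <;> exact this.elim p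

lemma IsMatching.sUnion {c : Set (Set (S × S))} (hc : IsChain (· ⊆ ·) c)
    (h : ∀ G ∈ c, IsMatching inv w G) : IsMatching inv w (⋃₀ c) where
  symm := by
    rintro a b ⟨G, hG, hab⟩
    exact ⟨G, hG, (h G hG).symm hab⟩
  unique := by
    rintro a b d ⟨G, hG, hab⟩ ⟨G', hG', had⟩
    rcases hc.total hG hG' with hs | hs
    · exact (h G' hG').unique (hs hab) had
    · exact (h G hG).unique hab (hs had)
  ne := by
    rintro a b ⟨G, hG, hab⟩
    exact (h G hG).ne hab
  label := by
    rintro a b ⟨G, hG, hab⟩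
    exact (h G hG).label hab
  nested := by
    rintro a b s ⟨G, hG, hab⟩ has hsb
    obtain ⟨t, ht, hat⟩ := (h G hG).nested hab has hsb
    exact ⟨t, ⟨G, hG, ht⟩, hat⟩

/-- A matching of `w` can be enlarged by a matching of the word which remains. -/
lemma IsMatching.union_image {G : Set (S × S)} (hG : IsMatching inv w G) {D : Set S}
    (hD : ∀ s, s ∈ D ↔ ∃ t, (s, t) ∈ G) {H : Set ({s // s ∉ D} × {s // s ∉ D})}
    (hH : IsMatching inv (fun s : {s // s ∉ D} => w s.1) H) :
    IsMatching inv w (G ∪ {p | ∃ a b, (a, b) ∈ H ∧ p = (a.1, b.1)}) where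
  symm := by
    rintro a b (h | ⟨a, b, h, e⟩)
    · exact Or.inl (hG.symm h)
    · cases e
      exact Or.inr ⟨b, a, hH.symm h, rfl⟩
  unique := by
    rintro a b c (h | ⟨a, b, h, e⟩) (h' | ⟨a', c, h', e'⟩)
    · exact hG.unique h h'
    · cases e'
      exact absurd ((hD _).2 ⟨_, h⟩) a'.2
    · cases e
      exact absurd ((hD _).2 ⟨_, h'⟩) a.2
    · cases e
      simp only [Prod.mk.injEq] at e'
      obtain rfl : a = a' := Subtype.ext e'.1
      rw [hH.unique h h', e'.2]
  ne := by
    rintro a b (h | ⟨a, b, h, e⟩)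
    · exact hG.ne h
    · cases e
      exact fun e => hH.ne h (Subtype.ext e)
  label := by
    rintro a b (h | ⟨a, b, h, e⟩)
    · exact hG.label h
    · cases e
      exact hH.label h
  nested := by
    rintro a b s (h | ⟨a, b, h, e⟩) has hsb
    · obtain ⟨t, ht, hat⟩ := hG.nested h has hsb
      exact ⟨t, Or.inl ht, hat⟩
    · cases e
      by_cases hs : s ∈ D
      · obtain ⟨t, ht⟩ := (hD s).1 hs
        have outside (u : {s // s ∉ D}) : ¬ (s < u.1 ∧ u.1 < t) ∧ ¬ (t < u.1 ∧ u.1 < s) := by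
          constructor
          · rintro ⟨h1, h2⟩
            obtain ⟨v, hv, -⟩ := hG.nested ht h1 h2
            exact u.2 ((hD _).2 ⟨v, hv⟩)
          · rintro ⟨h1, h2⟩
            obtain ⟨v, hv, -⟩ := hG.nested (hG.symm ht) h1 h2
            exact u.2 ((hD _).2 ⟨v, hv⟩)
        have htD : t ∈ D := (hD t).2 ⟨s, hG.symm ht⟩
        have hta : t ≠ a.1 := fun e => a.2 (e ▸ htD)
        have htb : t ≠ b.1 := fun e => b.2 (e ▸ htD)
        refine ⟨t, Or.inl ht, ?_, ?_⟩
        · exact lt_of_le_of_ne (not_lt.1 fun h => (outside a).2 ⟨h, has⟩) hta.symm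
        · exact lt_of_le_of_ne (not_lt.1 fun h => (outside b).1 ⟨hsb, h⟩) htb
      · obtain ⟨t, ht, hat, htb⟩ := hH.nested (s := ⟨s, hs⟩) h has hsb
        exact ⟨t.1, Or.inr ⟨_, _, ht, rfl⟩, hat, htb⟩

theorem exists_reduction_reduced (hinv : Function.Involutive inv) (w : S → A) :
    ∃ R : Reduction inv w, Reduced inv R.result := by
  obtain ⟨G, hmax⟩ := zorn_subset {G | IsMatching inv w G} fun c hc hchain =>
    ⟨⋃₀ c, IsMatching.sUnion hchain hc, fun s hs => Set.subset_sUnion_of_mem hs⟩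
  have hG : IsMatching inv w G := hmax.prop
  refine ⟨hG.reduction, fun R' => ⟨fun i => ?_⟩⟩
  have hU := hG.union_image hG.mem_deleted_iff (R'.isMatching hinv)
  have hi : ((R'.fst i).1, (R'.snd i).1) ∈ G :=
    hmax.le_of_ge hU subset_union_left (Or.inr ⟨_, _, ⟨i, Or.inl rfl⟩, rfl⟩)
  exact (R'.fst i).2 ((hG.mem_deleted_iff _).2 ⟨_, hi⟩)

end Matching

section Involution

open Equiv.Perm

lemma sum_eq_sum_fixed {S M : Type} [DecidableEq S] [AddCommGroup M] {m : Equiv.Perm S}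
    (hm : ∀ s, m (m s) = s) {T : Finset S} (hT : ∀ s ∈ T, m s ∈ T) (f : S → M)
    (hf : ∀ s ∈ T, m s ≠ s → f s + f (m s) = 0) :
    ∑ s ∈ T, f s = ∑ s ∈ T with m s = s, f s := by
  rw [← Finset.sum_filter_add_sum_filter_not T (fun s => m s = s) f, add_eq_left]
  refine Finset.sum_involution (fun s _ => m s) ?_ ?_ ?_ ?_
  · intro s hs
    rw [Finset.mem_filter] at hs
    exact hf s hs.1 hs.2
  · intro s hs _
    exact (Finset.mem_filter.1 hs).2
  · intro s hs
    rw [Finset.mem_filter] at hs ⊢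
    exact ⟨hT s hs.1, fun h => hs.2 (m.injective h)⟩
  · intro s _
    exact hm s

/-- The involution `m` is noncrossing, and has no fixed points below its arcs. -/
def Noncrossing {S : Type} [LinearOrder S] (m : Equiv.Perm S) : Prop :=
  ∀ a s, a < s → s < m a → m s ≠ s ∧ a < m s ∧ m s < m a

/-- The indicator of `a < b` modulo 2. -/
def ltParity {S : Type} [LinearOrder S] (a b : S) : ZMod 2 := if a < b then 1 else 0

lemma sum_ltParity_eq_sum_fixed {S : Type} [LinearOrder S] {m : Equiv.Perm S}
    (hm : ∀ s, m (m s) = s) (hnc : Noncrossing m) {T U : Finset S}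
    (hT : ∀ s ∈ T, m s ∈ T) (hU : ∀ s ∈ U, m s ∈ U) (hTU : Disjoint T U) :
    ∑ b ∈ U, ∑ a ∈ T, ltParity a b =
      ∑ b ∈ U with m b = b, ∑ a ∈ T with m a = a, ltParity a b := by
  have h2 : (1 : ZMod 2) + 1 = 0 := by decide
  have hne {a b : S} (ha : a ∈ T) (hb : b ∈ U) : a ≠ b :=
    fun e => Finset.disjoint_left.1 hTU ha (e ▸ hb)
  rw [sum_eq_sum_fixed hm hU]
  · refine Finset.sum_congr rfl fun b hb => ?_
    rw [Finset.mem_filter] at hb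
    refine sum_eq_sum_fixed hm hT _ fun a ha _ => ?_
    have h1 := hne ha hb.1
    have h3 := hne (hT a ha) hb.1
    have h4 := hnc a b
    have h5 := hnc (m a) b
    rw [hm] at h5
    unfold ltParity
    grind
  · intro b hb hfix
    rw [← Finset.sum_add_distrib, sum_eq_sum_fixed hm hT]
    · refine Finset.sum_eq_zero fun a ha => ?_
      rw [Finset.mem_filter] at ha
      have h1 := hne ha.1 hb
      have h3 := hne ha.1 (hU b hb)
      have h4 := hnc b a
      have h5 := hnc (m b) a
      rw [hm] at h5
      unfold ltParity
      grind
    · intro a ha hafix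
      have h1 := hne ha hb
      have h3 := hne ha (hU b hb)
      have h4 := hne (hT a ha) hb
      have h5 := hne (hT a ha) (hU b hb)
      have k1 := hnc b a
      have k2 := hnc (m b) a
      have k3 := hnc b (m a)
      have k4 := hnc (m b) (m a)
      simp only [hm] at k1 k2 k3 k4
      unfold ltParity
      grind

lemma inv_eq_self_of_involutive {S : Type} {m : Equiv.Perm S} (hm : ∀ s, m (m s) = s) :
    m⁻¹ = m := by
  ext s
  rw [Equiv.Perm.inv_eq_iff_eq, hm]

lemma sameCycle_mul_comm {S : Type} {m m' : Equiv.Perm S} (hm : ∀ s, m (m s) = s)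
    (hm' : ∀ s, m' (m' s) = s) {x y : S} :
    SameCycle (m * m') x y ↔ SameCycle (m' * m) x y := by
  rw [← sameCycle_inv, mul_inv_rev, inv_eq_self_of_involutive hm, inv_eq_self_of_involutive hm']

lemma apply_zpow_mul_of_fixed {S : Type} {m m' : Equiv.Perm S} (hm : ∀ s, m (m s) = s)
    (hm' : ∀ s, m' (m' s) = s) {x : S} (hx : m x = x) (k : ℤ) :
    m (((m' * m) ^ k) x) = ((m' * m) ^ (-k)) x := by
  have hconj : m * (m' * m) * m⁻¹ = (m' * m)⁻¹ := by
    rw [mul_inv_rev, inv_eq_self_of_involutive hm, inv_eq_self_of_involutive hm']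
    ext s
    simp [hm]
  have h := congrArg (fun τ => (τ ^ k) x) hconj
  rw [conj_zpow, inv_eq_self_of_involutive hm, Equiv.Perm.mul_apply, Equiv.Perm.mul_apply, hx,
    inv_zpow] at h
  rw [h, zpow_neg]

lemma sameCycle_apply_of_fixed {S : Type} {m m' : Equiv.Perm S} (hm : ∀ s, m (m s) = s)
    (hm' : ∀ s, m' (m' s) = s) {x y : S} (hx : m x = x) (h : SameCycle (m' * m) x y) :
    SameCycle (m' * m) x (m y) ∧ SameCycle (m' * m) x (m' y) := by
  have key {z : S} (h : SameCycle (m' * m) x z) : SameCycle (m' * m) x (m z) := by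
    obtain ⟨k, rfl⟩ := h
    exact ⟨-k, (apply_zpow_mul_of_fixed hm hm' hx k).symm⟩
  refine ⟨key h, ?_⟩
  have hr := sameCycle_apply_right.2 (key h)
  rwa [Equiv.Perm.mul_apply, hm] at hr

/-- The orbit under two involutions of a fixed point of the first one is a path, with
two ends. -/
lemma orbit_of_fixed {S : Type} {m m' : Equiv.Perm S} (hm : ∀ s, m (m s) = s)
    (hm' : ∀ s, m' (m' s) = s) {x : S} (hx : m x = x)
    (hfin : {y | SameCycle (m' * m) x y}.Finite) :
    (∃ y, y ≠ x ∧ SameCycle (m' * m) x y ∧ m y = y ∧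
      (∀ z, SameCycle (m' * m) x z → m z = z → z = x ∨ z = y) ∧
      ∀ z, SameCycle (m' * m) x z → m' z ≠ z) ∨
    (∃ y, SameCycle (m' * m) x y ∧ m' y = y ∧
      (∀ z, SameCycle (m' * m) x z → m z = z → z = x) ∧
      ∀ z, SameCycle (m' * m) x z → m' z = z → z = y) := by
  set σ := m' * m with hσ
  have hmk := apply_zpow_mul_of_fixed hm hm' hx
  rw [← hσ] at hmk
  have hm'k (k : ℤ) : m' ((σ ^ k) x) = (σ ^ (1 - k)) x := by
    have : m' ((σ ^ k) x) = σ (m ((σ ^ k) x)) := by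
      rw [hσ, Equiv.Perm.mul_apply, hm]
    rw [this, hmk, sub_eq_add_neg, zpow_add, zpow_one]
    rfl
  have heq (i j : ℤ) : (σ ^ i) x = (σ ^ j) x ↔
      (Function.minimalPeriod (σ • ·) x : ℤ) ∣ i - j := by
    rw [← MulAction.zpow_smul_eq_iff_minimalPeriod_dvd, Equiv.Perm.smul_def, sub_eq_neg_add,
      zpow_add, zpow_neg, Equiv.Perm.mul_apply, Equiv.Perm.inv_eq_iff_eq]
  generalize Function.minimalPeriod (σ • ·) x = n at heq
  have hn : n ≠ 0 := by
    rintro rfl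
    refine Set.infinite_of_injective_forall_mem (f := fun k : ℤ => (σ ^ k) x) ?_ ?_ hfin
    · intro i j hij
      have := (heq i j).1 hij
      simp only [Nat.cast_zero, zero_dvd_iff] at this
      omega
    · exact fun k => ⟨k, rfl⟩
  have heq0 (i : ℤ) : (σ ^ i) x = x ↔ (n : ℤ) ∣ i := by simpa using heq i 0
  rcases Nat.even_or_odd' n with ⟨k, rfl | rfl⟩
  · left
    refine ⟨(σ ^ (k : ℤ)) x, ?_, ⟨_, rfl⟩, ?_, ?_, ?_⟩
    · rw [Ne, heq0]
      intro h
      have := Int.le_of_dvd (by omega) h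
      omega
    · rw [hmk, heq]
      exact ⟨-1, by push_cast; ring⟩
    · rintro z ⟨i, rfl⟩ hz
      rw [hmk, heq] at hz
      obtain ⟨c, hc⟩ := hz
      rw [heq0, heq]
      rcases Int.even_or_odd' c with ⟨d, rfl | rfl⟩
      · exact Or.inl ⟨-d, by push_cast at hc ⊢; linarith⟩
      · refine Or.inr ⟨-d - 1, by push_cast at hc ⊢; linarith⟩
    · rintro z ⟨i, rfl⟩ hz
      rw [hm'k, heq] at hz
      obtain ⟨c, hc⟩ := hz
      push_cast at hc
      rw [mul_assoc] at hc
      omega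
  · right
    refine ⟨(σ ^ (k + 1 : ℤ)) x, ⟨_, rfl⟩, ?_, ?_, ?_⟩
    · rw [hm'k, heq]
      exact ⟨-1, by push_cast; ring⟩
    · rintro z ⟨i, rfl⟩ hz
      rw [hmk, heq] at hz
      rw [heq0]
      have h2 : ((2 * k + 1 : ℕ) : ℤ) ∣ i * 2 := by
        obtain ⟨c, hc⟩ := hz
        exact ⟨-c, by push_cast at hc ⊢; linarith⟩
      refine IsCoprime.dvd_of_dvd_mul_right ?_ h2
      exact ⟨1, -k, by push_cast; ring⟩
    · rintro z ⟨i, rfl⟩ hz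
      rw [hm'k, heq] at hz
      rw [heq]
      have h2 : ((2 * k + 1 : ℕ) : ℤ) ∣ (i - (k + 1)) * 2 := by
        obtain ⟨c, hc⟩ := hz
        exact ⟨-c - 1, by push_cast at hc ⊢; linarith⟩
      refine IsCoprime.dvd_of_dvd_mul_right ?_ h2
      exact ⟨1, -k, by push_cast; ring⟩

/-- The orbit of `x` is a path leading from a fixed point `x` of the first involution to a
fixed point `y` of the second one. -/
structure Linked {S : Type} (m m' : Equiv.Perm S) (x y : S) : Prop where
  sameCycle : SameCycle (m' * m) x y
  left : m x = x
  right : m' y = y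
  unique_left : ∀ z, SameCycle (m' * m) x z → m z = z → z = x
  unique_right : ∀ z, SameCycle (m' * m) x z → m' z = z → z = y

/-- The orbit of `x` is a path between two distinct fixed points `x` and `y` of `m`. -/
structure Paired {S : Type} (m m' : Equiv.Perm S) (x y : S) : Prop where
  sameCycle : SameCycle (m' * m) x y
  ne : x ≠ y
  left : m x = x
  right : m y = y
  eq_or_eq : ∀ z, SameCycle (m' * m) x z → m z = z → z = x ∨ z = y
  ne_self : ∀ z, SameCycle (m' * m) x z → m' z ≠ z

lemma Paired.symm {S : Type} {m m' : Equiv.Perm S} {x y : S} (h : Paired m m' x y) :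
    Paired m m' y x where
  sameCycle := h.sameCycle.symm
  ne := h.ne.symm
  left := h.right
  right := h.left
  eq_or_eq z hz hmz := (h.eq_or_eq z (h.sameCycle.trans hz) hmz).symm
  ne_self z hz := h.ne_self z (h.sameCycle.trans hz)

lemma Paired.mem_iff {S : Type} [DecidableEq S] {m m' : Equiv.Perm S}
    {x y : S} (h : Paired m m' x y) (z : S) :
    z ∈ ({x, y} : Finset S) ↔ SameCycle (m' * m) x z ∧ m z = z := by
  rw [Finset.mem_insert, Finset.mem_singleton]
  refine ⟨?_, fun hz => h.eq_or_eq z hz.1 hz.2⟩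
  rintro (rfl | rfl)
  · exact ⟨SameCycle.refl _ _, h.left⟩
  · exact ⟨h.sameCycle, h.right⟩

lemma Paired.mem_empty_iff {S : Type} {m m' : Equiv.Perm S}
    {x y : S} (h : Paired m m' x y) (z : S) :
    z ∈ (∅ : Finset S) ↔ SameCycle (m' * m) x z ∧ m' z = z := by
  have := h.ne_self z
  simpa using this

lemma Linked.mem_left_iff {S : Type} {m m' : Equiv.Perm S}
    {x y : S} (h : Linked m m' x y) (z : S) :
    z ∈ ({x} : Finset S) ↔ SameCycle (m' * m) x z ∧ m z = z := by
  rw [Finset.mem_singleton]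
  refine ⟨?_, fun hz => h.unique_left z hz.1 hz.2⟩
  rintro rfl
  exact ⟨SameCycle.refl _ _, h.left⟩

lemma Linked.mem_right_iff {S : Type} {m m' : Equiv.Perm S}
    {x y : S} (h : Linked m m' x y) (z : S) :
    z ∈ ({y} : Finset S) ↔ SameCycle (m' * m) x z ∧ m' z = z := by
  rw [Finset.mem_singleton]
  refine ⟨?_, fun hz => h.unique_right z hz.1 hz.2⟩
  rintro rfl
  exact ⟨h.sameCycle, h.right⟩

end Involution

section Uniqueness

open Equiv.Perm

variable {S : Type} [LinearOrder S]

lemma Letter.inv_involutive : Function.Involutive Letter.inv := fun a => by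
  simp [Letter.inv]

/-- `m` is the involution exchanging the positions paired by a reduction of `w`. -/
structure IsReducing (w : S → Letter) (m : Equiv.Perm S) : Prop where
  invol : ∀ s, m (m s) = s
  noncrossing : Noncrossing m
  label : ∀ s, m s ≠ s → w (m s) = Letter.inv (w s)

lemma Reduction.exists_isReducing {w : S → Letter} (R : Reduction Letter.inv w) :
    ∃ m : Equiv.Perm S, IsReducing w m ∧ ∀ s, s ∉ R.deleted ↔ m s = s := by
  classical
  have hG := R.isMatching Letter.inv_involutive
  let f : S → S := fun s => if h : ∃ t, (s, t) ∈ R.pairs then h.choose else s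
  have hf {s t : S} (h : (s, t) ∈ R.pairs) : f s = t := by
    have hex : ∃ t, (s, t) ∈ R.pairs := ⟨t, h⟩
    simp only [f, dif_pos hex]
    exact hG.unique hex.choose_spec h
  have hfix {s : S} (h : ¬ ∃ t, (s, t) ∈ R.pairs) : f s = s := dif_neg h
  have hne {s : S} (h : f s ≠ s) : (s, f s) ∈ R.pairs := by
    by_cases hs : ∃ t, (s, t) ∈ R.pairs
    · obtain ⟨t, ht⟩ := hs
      rwa [hf ht]
    · exact absurd (hfix hs) h
  have hinv : Function.Involutive f := by
    intro s
    by_cases hs : f s = s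
    · rw [hs, hs]
    · exact hf (hG.symm (hne hs))
  refine ⟨hinv.toPerm f, ⟨hinv, ?_, ?_⟩, ?_⟩
  · intro a s has hsa
    simp only [Function.Involutive.coe_toPerm] at hsa ⊢
    obtain ⟨t, hst, h⟩ := hG.nested (hne (has.trans hsa).ne') has hsa
    rw [hf hst]
    exact ⟨(hG.ne hst).symm, h⟩
  · intro s hs
    exact hG.label (hne hs)
  · intro s
    rw [R.mem_deleted_iff]
    refine ⟨hfix, ?_⟩
    rintro h ⟨t, ht⟩
    exact hG.ne ht ((hf ht).symm.trans h).symm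

/-- The orientation of a letter, as a sign. -/
def Letter.sign (a : Letter) : ℤ := if a.1 then 1 else -1

lemma Letter.sign_inv (a : Letter) : a.sign + a.inv.sign = 0 := by
  rcases a with ⟨_ | _, n⟩ <;> simp [sign, inv]

lemma Letter.eq_inv_of_sign {a b : Letter} (h : a.sign + b.sign = 0) (hi : a.2 = b.2) :
    b = a.inv := by
  rcases a with ⟨_ | _, n⟩ <;> rcases b with ⟨_ | _, k⟩ <;> simp_all [sign, inv]

lemma Letter.eq_of_sign {a b : Letter} (h : a.sign = b.sign) (hi : a.2 = b.2) : a = b := by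
  rcases a with ⟨_ | _, n⟩ <;> rcases b with ⟨_ | _, k⟩ <;> simp_all [sign]

variable {w : S → Letter} {m m' : Equiv.Perm S}

lemma IsReducing.index_eq (h : IsReducing w m) (s : S) : (w (m s)).2 = (w s).2 := by
  by_cases hs : m s = s
  · rw [hs]
  · rw [h.label s hs, Letter.inv]

lemma IsReducing.index_eq_of_sameCycle (h : IsReducing w m) (h' : IsReducing w m') {x y : S}
    (hxy : SameCycle (m' * m) x y) : (w x).2 = (w y).2 := by
  obtain ⟨k, rfl⟩ := hxy
  have step (s : S) : (w ((m' * m) s)).2 = (w s).2 := by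
    rw [Equiv.Perm.mul_apply, h'.index_eq, h.index_eq]
  induction k with
  | zero => rfl
  | succ k ih => rw [add_comm, zpow_add, zpow_one, Equiv.Perm.mul_apply, step, ← ih]
  | pred k ih =>
    rw [ih, ← step (((m' * m) ^ (-(k : ℤ) - 1)) x), ← Equiv.Perm.mul_apply (m' * m),
      ← zpow_one_add]
    congr 4
    ring_nf

lemma IsReducing.finite_orbit (hfib : ∀ a : Letter, {s | w s = a}.Finite)
    (h : IsReducing w m) (h' : IsReducing w m') (x : S) :
    {y | SameCycle (m' * m) x y}.Finite := by
  refine ((hfib (true, (w x).2)).union (hfib (false, (w x).2))).subset fun y hy => ?_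
  have hi := h.index_eq_of_sameCycle h' hy
  rcases hb : (w y).1 with _ | _
  · exact Or.inr (Prod.ext hb hi.symm)
  · exact Or.inl (Prod.ext hb hi.symm)

lemma Linked.symm (h : IsReducing w m) (h' : IsReducing w m') {x y : S}
    (hl : Linked m m' x y) : Linked m' m y x where
  sameCycle := (sameCycle_mul_comm h.invol h'.invol).2 hl.sameCycle.symm
  left := hl.right
  right := hl.left
  unique_left z hz hmz := hl.unique_right z
    (hl.sameCycle.trans ((sameCycle_mul_comm h.invol h'.invol).1 hz)) hmz
  unique_right z hz hmz := hl.unique_left z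
    (hl.sameCycle.trans ((sameCycle_mul_comm h.invol h'.invol).1 hz)) hmz

lemma IsReducing.paired_or_linked (hfib : ∀ a : Letter, {s | w s = a}.Finite)
    (h : IsReducing w m) (h' : IsReducing w m') {x : S} (hx : m x = x) :
    (∃ y, Paired m m' x y) ∨ ∃ y, Linked m m' x y := by
  rcases orbit_of_fixed h.invol h'.invol hx (h.finite_orbit hfib h' x) with
    ⟨y, h1, h2, h3, h4, h5⟩ | ⟨y, h1, h2, h3, h4⟩
  · exact Or.inl ⟨y, h2, h1.symm, hx, h3, h4, h5⟩
  · exact Or.inr ⟨y, h1, hx, h2, h3, h4⟩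

lemma IsReducing.sum_sign_eq (hfib : ∀ a : Letter, {s | w s = a}.Finite)
    (h : IsReducing w m) (h' : IsReducing w m') {x : S} (hx : m x = x) {F F' : Finset S}
    (hF : ∀ z, z ∈ F ↔ SameCycle (m' * m) x z ∧ m z = z)
    (hF' : ∀ z, z ∈ F' ↔ SameCycle (m' * m) x z ∧ m' z = z) :
    ∑ z ∈ F, (w z).sign = ∑ z ∈ F', (w z).sign := by
  set T := (h.finite_orbit hfib h' x).toFinset with hT
  have hmem (z : S) : z ∈ T ↔ SameCycle (m' * m) x z := by simp [hT]
  have hTm (z : S) (hz : z ∈ T) : m z ∈ T ∧ m' z ∈ T := by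
    rw [hmem] at hz
    rw [hmem, hmem]
    exact sameCycle_apply_of_fixed h.invol h'.invol hx hz
  obtain rfl : F = T.filter (fun z => m z = z) := by ext z; rw [hF, Finset.mem_filter, hmem]
  obtain rfl : F' = T.filter (fun z => m' z = z) := by ext z; rw [hF', Finset.mem_filter, hmem]
  rw [← sum_eq_sum_fixed h.invol (fun z hz => (hTm z hz).1) (fun z => (w z).sign),
    ← sum_eq_sum_fixed h'.invol (fun z hz => (hTm z hz).2) (fun z => (w z).sign)]
  · intro s _ hs
    rw [h'.label s hs, Letter.sign_inv]
  · intro s _ hs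
    rw [h.label s hs, Letter.sign_inv]

lemma IsReducing.sum_ltParity_eq (hfib : ∀ a : Letter, {s | w s = a}.Finite)
    (h : IsReducing w m) (h' : IsReducing w m') {x y : S} (hx : m x = x) (hy : m y = y)
    (hxy : ¬ SameCycle (m' * m) x y) {F F' K K' : Finset S}
    (hF : ∀ z, z ∈ F ↔ SameCycle (m' * m) x z ∧ m z = z)
    (hF' : ∀ z, z ∈ F' ↔ SameCycle (m' * m) x z ∧ m' z = z)
    (hK : ∀ z, z ∈ K ↔ SameCycle (m' * m) y z ∧ m z = z)
    (hK' : ∀ z, z ∈ K' ↔ SameCycle (m' * m) y z ∧ m' z = z) :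
    ∑ b ∈ K, ∑ a ∈ F, ltParity a b = ∑ b ∈ K', ∑ a ∈ F', ltParity a b := by
  set T := (h.finite_orbit hfib h' x).toFinset with hT
  set U := (h.finite_orbit hfib h' y).toFinset with hU
  have hTmem (z : S) : z ∈ T ↔ SameCycle (m' * m) x z := by simp [hT]
  have hUmem (z : S) : z ∈ U ↔ SameCycle (m' * m) y z := by simp [hU]
  have hTm (z : S) (hz : z ∈ T) : m z ∈ T ∧ m' z ∈ T := by
    rw [hTmem] at hz
    rw [hTmem, hTmem]
    exact sameCycle_apply_of_fixed h.invol h'.invol hx hz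
  have hUm (z : S) (hz : z ∈ U) : m z ∈ U ∧ m' z ∈ U := by
    rw [hUmem] at hz
    rw [hUmem, hUmem]
    exact sameCycle_apply_of_fixed h.invol h'.invol hy hz
  have hTU : Disjoint T U := by
    refine Finset.disjoint_left.2 fun z hzT hzU => hxy ?_
    rw [hTmem] at hzT
    rw [hUmem] at hzU
    exact hzT.trans hzU.symm
  obtain rfl : F = T.filter (fun z => m z = z) := by ext z; rw [hF, Finset.mem_filter, hTmem]
  obtain rfl : F' = T.filter (fun z => m' z = z) := by ext z; rw [hF', Finset.mem_filter, hTmem]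
  obtain rfl : K = U.filter (fun z => m z = z) := by ext z; rw [hK, Finset.mem_filter, hUmem]
  obtain rfl : K' = U.filter (fun z => m' z = z) := by ext z; rw [hK', Finset.mem_filter, hUmem]
  rw [← sum_ltParity_eq_sum_fixed h.invol h.noncrossing (fun z hz => (hTm z hz).1)
      (fun z hz => (hUm z hz).1) hTU,
    ← sum_ltParity_eq_sum_fixed h'.invol h'.noncrossing (fun z hz => (hTm z hz).2)
      (fun z hz => (hUm z hz).2) hTU]

lemma Paired.label_eq (hfib : ∀ a : Letter, {s | w s = a}.Finite)
    (h : IsReducing w m) (h' : IsReducing w m') {x y : S} (hp : Paired m m' x y) :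
    w y = Letter.inv (w x) := by
  have hs := h.sum_sign_eq hfib h' hp.left hp.mem_iff hp.mem_empty_iff
  rw [Finset.sum_pair hp.ne, Finset.sum_empty] at hs
  exact Letter.eq_inv_of_sign hs (h.index_eq_of_sameCycle h' hp.sameCycle)

lemma Linked.label_eq (hfib : ∀ a : Letter, {s | w s = a}.Finite)
    (h : IsReducing w m) (h' : IsReducing w m') {x y : S} (hl : Linked m m' x y) :
    w y = w x := by
  have hs := h.sum_sign_eq hfib h' hl.left hl.mem_left_iff hl.mem_right_iff
  rw [Finset.sum_singleton, Finset.sum_singleton] at hs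
  exact (Letter.eq_of_sign hs (h.index_eq_of_sameCycle h' hl.sameCycle)).symm

lemma Paired.exists_between (hfib : ∀ a : Letter, {s | w s = a}.Finite)
    (h : IsReducing w m) (h' : IsReducing w m') {x y s : S} (hp : Paired m m' x y)
    (hs : m s = s) (hxs : x < s) (hsy : s < y) :
    ∃ t, Paired m m' s t ∧ x < t ∧ t < y := by
  have hne : ¬ SameCycle (m' * m) x s := fun hc => by
    rcases hp.eq_or_eq s hc hs with rfl | rfl
    · exact hxs.false
    · exact hsy.false
  have hxy := hxs.trans hsy
  rcases h.paired_or_linked hfib h' hs with ⟨t, ht⟩ | ⟨t, ht⟩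
  · refine ⟨t, ht, ?_⟩
    have hpar := h.sum_ltParity_eq hfib h' hp.left hs hne hp.mem_iff hp.mem_empty_iff
      ht.mem_iff ht.mem_empty_iff
    have htx : t ≠ x := by
      rintro rfl
      exact hne ht.sameCycle.symm
    have hty : t ≠ y := by
      rintro rfl
      exact hne (hp.sameCycle.trans ht.sameCycle.symm)
    rw [Finset.sum_pair ht.ne, Finset.sum_pair hp.ne, Finset.sum_pair hp.ne,
      Finset.sum_empty] at hpar
    simp only [ltParity, if_pos hxs, if_neg hsy.not_gt] at hpar
    by_contra hcon
    rcases lt_or_gt_of_ne htx with h1 | h1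
    · rw [if_neg h1.not_gt, if_neg (h1.trans hxy).not_gt] at hpar
      exact absurd hpar (by decide)
    · have h2 : y < t := lt_of_le_of_ne (not_lt.1 fun h2 => hcon ⟨h1, h2⟩) hty.symm
      rw [if_pos h1, if_pos h2] at hpar
      exact absurd hpar (by decide)
  · have hpar := h.sum_ltParity_eq hfib h' hp.left hs hne hp.mem_iff hp.mem_empty_iff
      ht.mem_left_iff ht.mem_right_iff
    rw [Finset.sum_singleton, Finset.sum_singleton, Finset.sum_pair hp.ne,
      Finset.sum_empty] at hpar
    simp only [ltParity, if_pos hxs, if_neg hsy.not_gt] at hpar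
    exact absurd hpar (by decide)

lemma Linked.lt_of_lt (hfib : ∀ a : Letter, {s | w s = a}.Finite)
    (h : IsReducing w m) (h' : IsReducing w m') {x x' y y' : S} (hx : Linked m m' x x')
    (hy : Linked m m' y y') (hxy : x < y) : x' < y' := by
  have hne : ¬ SameCycle (m' * m) x y := fun hc => hxy.ne' (hx.unique_left y hc hy.left)
  have hpar := h.sum_ltParity_eq hfib h' hx.left hy.left hne hx.mem_left_iff hx.mem_right_iff
    hy.mem_left_iff hy.mem_right_iff
  simp only [Finset.sum_singleton, ltParity, if_pos hxy] at hpar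
  by_contra hcon
  rw [if_neg hcon] at hpar
  exact absurd hpar (by decide)

lemma exists_linked_of_reduced (hfib : ∀ a : Letter, {s | w s = a}.Finite)
    (h : IsReducing w m) (h' : IsReducing w m') {D : Set S} (hD : ∀ s, s ∉ D ↔ m s = s)
    (hred : Reduced Letter.inv (fun s : {s // s ∉ D} => w s.1)) {x : S} (hx : m x = x) :
    ∃ y, Linked m m' x y := by
  refine (h.paired_or_linked hfib h' hx).resolve_left ?_
  rintro ⟨y, hp⟩
  have hG : IsMatching Letter.inv (fun s : {s // s ∉ D} => w s.1)
      {p | Paired m m' p.1.1 p.2.1} :=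
    { symm := fun hp => hp.symm
      unique := fun {a b c} hb hc => Subtype.ext <|
        ((hb.eq_or_eq c.1 hc.sameCycle hc.right).resolve_left hc.ne.symm).symm
      ne := fun hp e => hp.ne (congrArg Subtype.val e)
      label := fun hp => hp.label_eq hfib h h'
      nested := fun {a b s} hp has hsb => by
        obtain ⟨t, ht, hat⟩ := hp.exists_between hfib h h' ((hD _).1 s.2) has hsb
        exact ⟨⟨t, (hD t).2 ht.right⟩, ht, hat⟩ }
  exact hred.notMem_matching hG ⟨x, (hD x).2 hx⟩ ⟨y, (hD y).2 hp.right⟩ hp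

theorem wordEquiv_of_reduced (hfib : ∀ a : Letter, {s | w s = a}.Finite)
    (R R' : Reduction Letter.inv w) (hR : Reduced Letter.inv R.result)
    (hR' : Reduced Letter.inv R'.result) : WordEquiv R.result R'.result := by
  obtain ⟨m, h, hD⟩ := R.exists_isReducing
  obtain ⟨m', h', hD'⟩ := R'.exists_isReducing
  have hex (x : {s // s ∉ R.deleted}) : ∃ y : {s // s ∉ R'.deleted}, Linked m m' x.1 y.1 := by
    obtain ⟨y, hy⟩ := exists_linked_of_reduced hfib h h' hD hR ((hD _).1 x.2)
    exact ⟨⟨y, (hD' y).2 hy.right⟩, hy⟩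
  choose f hf using hex
  have hmono : StrictMono f := fun x y hxy => (hf x).lt_of_lt hfib h h' (hf y) hxy
  have hsurj : Function.Surjective f := by
    intro y
    obtain ⟨x, hx⟩ := exists_linked_of_reduced hfib h' h hD' hR' ((hD' _).1 y.2)
    have hl := hx.symm h' h
    exact ⟨⟨x, (hD x).2 hx.right⟩, Subtype.ext
      (hl.unique_right _ (hf ⟨x, (hD x).2 hx.right⟩).sameCycle (hf _).right)⟩
  exact ⟨hmono.orderIsoOfSurjective f hsurj, fun x => (hf x).label_eq hfib h h'⟩

end Uniqueness

/-- Lemma `uniquereduced`. Every word `w : S → Letter` in the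
alphabet `A = {e⃗ᵢ, e⃖ᵢ : i ∈ ℕ}` (countable totally ordered domain, finite fibers)
reduces to a reduced word, and this reduced word is unique as an abstract word (up to
an order-preserving bijection of the domains commuting with the labellings). -/
theorem statement12 {S : Type} [LinearOrder S] [Countable S]
    (w : S → Letter) (hfib : ∀ a : Letter, {s | w s = a}.Finite) :
    (∃ R : Reduction Letter.inv w, Reduced Letter.inv R.result) ∧
    (∀ R R' : Reduction Letter.inv w,
      Reduced Letter.inv R.result → Reduced Letter.inv R'.result →
      WordEquiv R.result R'.result) :=
  ⟨exists_reduction_reduced Letter.inv_involutive w, wordEquiv_of_reduced hfib⟩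
end
end
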